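/- (Dobrushin contraction, inequality (5).) Let X and Y be finite sets and M a row-stochastic matrix whose rows m(x) ∈ Δ(Y) for x ∈ X, and let λ := max_{x,x'∈X} ‖m(x) − m(x')‖_TV. Then for all φ, φ' ∈ Δ(X): ‖φᵀM − φ'ᵀM‖_TV ≤ λ·‖φ − φ'‖_TV, where (φᵀM)(y) = Σ_{x} φ(x)·M(x,y). Moreover, if every entry of M is strictly positive, then λ < 1, so φ ↦ φᵀM is a strict contraction on Δ(X) in total variation. -/

import Mathlib

/-!
The difference `d = φ - φ'` has total mass zero, so its positive and negative parts carry the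
same mass `δ = tv d`. Transporting one onto the other by the product coupling writes
`δ • dᵀM` as a nonnegative combination, of total weight `δ ^ 2`, of differences of rows of `M`,
each of norm at most `λ`; the triangle inequality and division by `δ` give the contraction
(`tv_vecMul_le`). For strictly positive `M` the maximum `λ` is attained at a pair of strictly
positive rows, whose distance is below `1` (`tv_sub_lt_one`).
-/

/-- Total variation norm `‖f‖_TV = (1/2) Σ_y |f y|` on a finite set. -/
noncomputable def tv {Y : Type*} [Fintype Y] (f : Y → ℝ) : ℝ := (1 / 2) * ∑ y, |f y|

/-- Contraction for a signed vector `d` of total mass zero. The positive and negative parts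
`p`, `n` of `d` have the same mass `δ = tv d`, and coupling them by `p ⊗ n` gives the identity
`δ * (dᵀM) y = ∑ x, ∑ x', p x * n x' * (M x y - M x' y)`. -/
theorem tv_vecMul_le {X Y : Type*} [Fintype X] [Fintype Y] (M : X → Y → ℝ) (lam : ℝ)
    (hlam : ∀ x x' : X, tv (fun y => M x y - M x' y) ≤ lam)
    (d : X → ℝ) (hd : ∑ x, d x = 0) :
    tv (fun y => ∑ x, d x * M x y) ≤ lam * tv d := by
  obtain ⟨δ, hδ⟩ : ∃ δ, δ = tv d := ⟨_, rfl⟩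
  obtain ⟨p, hp⟩ : ∃ p : X → ℝ, ∀ x, p x = (|d x| + d x) / 2 := ⟨_, fun _ => rfl⟩
  obtain ⟨n, hn⟩ : ∃ n : X → ℝ, ∀ x, n x = (|d x| - d x) / 2 := ⟨_, fun _ => rfl⟩
  have hp0 : ∀ x, 0 ≤ p x := fun x => by
    rw [hp]; linarith [neg_abs_le (d x)]
  have hn0 : ∀ x, 0 ≤ n x := fun x => by
    rw [hn]; linarith [le_abs_self (d x)]
  have hpn : ∀ x, d x = p x - n x := fun x => by rw [hp, hn]; ring
  have hps : ∑ x, p x = δ := by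
    simp only [hp, hδ, tv, ← Finset.sum_div, Finset.sum_add_distrib, hd]; ring
  have hns : ∑ x, n x = δ := by
    simp only [hn, hδ, tv, ← Finset.sum_div, Finset.sum_sub_distrib, hd]; ring
  have hδ0 : 0 ≤ δ := hps ▸ Finset.sum_nonneg fun x _ => hp0 x
  rw [← hδ]
  rcases hδ0.eq_or_lt with h0 | hpos
  · have hz : ∀ x, d x = 0 := by
      rw [← h0] at hps hns
      intro x
      have h1 := (Finset.sum_eq_zero_iff_of_nonneg fun x _ => hp0 x).1 hps x (Finset.mem_univ x)
      have h2 := (Finset.sum_eq_zero_iff_of_nonneg fun x _ => hn0 x).1 hns x (Finset.mem_univ x)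
      rw [hpn, h1, h2, sub_zero]
    simp [tv, hz, ← h0]
  · have key : ∀ y, δ * ∑ x, d x * M x y = ∑ x, ∑ x', p x * n x' * (M x y - M x' y) := by
      intro y
      have e1 : ∑ x, ∑ x', p x * n x' * M x y = δ * ∑ x, p x * M x y := by
        rw [← hns, Finset.sum_mul_sum, Finset.sum_comm]
        exact Finset.sum_congr rfl fun _ _ => Finset.sum_congr rfl fun _ _ => by ring
      have e2 : ∑ x, ∑ x', p x * n x' * M x' y = δ * ∑ x, n x * M x y := by
        rw [← hps, Finset.sum_mul_sum]
        exact Finset.sum_congr rfl fun _ _ => Finset.sum_congr rfl fun _ _ => by ring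
      simp only [mul_sub, Finset.sum_sub_distrib, e1, e2]
      rw [← mul_sub, ← Finset.sum_sub_distrib]
      congr 1
      exact Finset.sum_congr rfl fun x _ => by rw [hpn]; ring
    have hb : ∀ y, δ * |∑ x, d x * M x y| ≤ ∑ x, ∑ x', p x * n x' * |M x y - M x' y| := by
      intro y
      have e : δ * |∑ x, d x * M x y| = |δ * ∑ x, d x * M x y| := by
        rw [abs_mul, abs_of_nonneg hδ0]
      rw [e, key]
      refine (Finset.abs_sum_le_sum_abs _ _).trans (Finset.sum_le_sum fun x _ => ?_)
      refine (Finset.abs_sum_le_sum_abs _ _).trans (Finset.sum_le_sum fun x' _ => ?_)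
      rw [abs_mul, abs_of_nonneg (mul_nonneg (hp0 x) (hn0 x'))]
    have hmain : δ * tv (fun y => ∑ x, d x * M x y) ≤ δ * (lam * δ) := by
      calc δ * tv (fun y => ∑ x, d x * M x y)
          = (1 / 2) * ∑ y, δ * |∑ x, d x * M x y| := by
            rw [tv, ← Finset.mul_sum]; ring
        _ ≤ (1 / 2) * ∑ y, ∑ x, ∑ x', p x * n x' * |M x y - M x' y| := by
            gcongr with y; exact hb y
        _ = ∑ x, ∑ x', p x * n x' * tv (fun y => M x y - M x' y) := by
            rw [Finset.sum_comm, Finset.mul_sum]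
            refine Finset.sum_congr rfl fun x _ => ?_
            rw [Finset.sum_comm, Finset.mul_sum]
            refine Finset.sum_congr rfl fun x' _ => ?_
            rw [tv, ← Finset.mul_sum]; ring
        _ ≤ ∑ x, ∑ x', p x * n x' * lam :=
            Finset.sum_le_sum fun x _ => Finset.sum_le_sum fun x' _ =>
              mul_le_mul_of_nonneg_left (hlam x x') (mul_nonneg (hp0 x) (hn0 x'))
        _ = δ * (lam * δ) := by
            simp only [← Finset.sum_mul, ← Finset.mul_sum, hps, hns]; ring
    exact le_of_mul_le_mul_left hmain hpos

/-- Two strictly positive probability vectors are at distance less than `1`, because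
`|a - b| < a + b` for positive `a`, `b`. -/
theorem tv_sub_lt_one {Y : Type*} [Fintype Y] (f g : Y → ℝ) (hf : ∀ y, 0 < f y)
    (hg : ∀ y, 0 < g y) (hf1 : ∑ y, f y = 1) (hg1 : ∑ y, g y = 1) :
    tv (fun y => f y - g y) < 1 := by
  have hne : (Finset.univ : Finset Y).Nonempty := by
    by_contra h
    rw [Finset.not_nonempty_iff_eq_empty] at h
    simp [h] at hf1
  have : ∑ y, |f y - g y| < ∑ y, (f y + g y) :=
    Finset.sum_lt_sum_of_nonempty hne fun y _ =>
      abs_lt.2 ⟨by linarith [hf y], by linarith [hg y]⟩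
  rw [Finset.sum_add_distrib, hf1, hg1] at this
  rw [tv]; linarith

/-- Dobrushin contraction. Let `M` be a row-stochastic matrix from the
finite set `X` to the finite set `Y`, and let `λ` be the maximum total-variation distance
between two of its rows (its Dobrushin coefficient).  Then for all distributions φ, φ' on
`X`, `‖φᵀM − φ'ᵀM‖_TV ≤ λ‖φ − φ'‖_TV`; moreover if all entries of `M` are strictly
positive then `λ < 1`. -/
theorem statement10
    {X Y : Type*} [Fintype X] [Fintype Y]
    (M : X → Y → ℝ) (hM0 : ∀ x y, 0 ≤ M x y) (hM1 : ∀ x, ∑ y, M x y = 1)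
    (lam : ℝ)
    (hlam_ub : ∀ x x' : X, tv (fun y => M x y - M x' y) ≤ lam)
    (hlam_mem : ∃ x x' : X, tv (fun y => M x y - M x' y) = lam) :
    (∀ φ φ' : X → ℝ, (∀ x, 0 ≤ φ x) → (∑ x, φ x = 1) →
        (∀ x, 0 ≤ φ' x) → (∑ x, φ' x = 1) →
        tv (fun y => (∑ x, φ x * M x y) - ∑ x, φ' x * M x y) ≤
          lam * tv (fun x => φ x - φ' x)) ∧
    ((∀ x y, 0 < M x y) → lam < 1) := by
  refine ⟨fun φ φ' _ h1 _ h1' => ?_, fun hpos => ?_⟩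
  · have h := tv_vecMul_le M lam hlam_ub (fun x => φ x - φ' x)
      (by rw [Finset.sum_sub_distrib, h1, h1', sub_self])
    simpa only [sub_mul, Finset.sum_sub_distrib] using h
  · obtain ⟨x, x', rfl⟩ := hlam_mem
    exact tv_sub_lt_one _ _ (hpos x) (hpos x') (hM1 x) (hM1 x')
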